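/- arXiv:2004.13500 — 5 statements merged into one kernel-verified Lean document; each statement's English description precedes it below -/
import Mathlib

section
/- For a t-set (X, ⪯) the following are equivalent: (1) X is a bounded complete t-set; (2) le(X) ≠ ∅ and for all x, y ∈ X with ub({x, y}) ≠ ∅ one has sup({x, y}) ≠ ∅; (3) for every finite subset A of X that is bounded from above (ub(A) ≠ ∅), sup(A) ≠ ∅; (4) for every finite subset A of X, ub(A) is either empty or an upper cone. -/
/-!
By transitivity `ub(A)` is an upper set, and an upper set is an upper cone exactly when it has a
least element. Hence "`ub(A)` is empty or an upper cone" says the same as "if `ub(A)` is nonempty,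
then so is `sup(A)`" (`ubs_eq_empty_or_isUpperCone_iff`). This gives (1) ↔ (2) and (3) ↔ (4), where
`X` itself is `ub(∅)`, and (3) → (2) is the special case of `∅` and of pairs.

For (2) → (3), induct on the finite set: if `s ∈ sup(S)`, then `ub(S) = ↑s`, so
`ub({a} ∪ S) = ub({a, s})` (`ubs_insert_eq`), and the case of pairs applies.
-/


variable {X : Type*}

/-- Upper bounds of `A` w.r.t. the relation `r`. -/
def ubs (r : X → X → Prop) (A : Set X) : Set X := {x | ∀ y ∈ A, r y x}

/-- Lower bounds of `A` w.r.t. the relation `r`. -/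
def lbs (r : X → X → Prop) (A : Set X) : Set X := {x | ∀ y ∈ A, r x y}

/-- Least elements of `A`. -/
def les (r : X → X → Prop) (A : Set X) : Set X := {x | x ∈ A ∧ ∀ y ∈ A, r x y}

/-- Largest elements of `A`. -/
def las (r : X → X → Prop) (A : Set X) : Set X := {x | x ∈ A ∧ ∀ y ∈ A, r y x}

/-- The supremum set `sup(A) = le(ub(A))`. -/
def sups (r : X → X → Prop) (A : Set X) : Set X := les r (ubs r A)

/-- The infimum set `inf(A) = la(lb(A))`. -/
def infs (r : X → X → Prop) (A : Set X) : Set X := las r (lbs r A)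

/-- Upper closure `↑(A)`. -/
def upCl (r : X → X → Prop) (A : Set X) : Set X := {x | ∃ y ∈ A, r y x}

/-- `A` is an upper cone: `A = ↑x` for some `x ∈ A`. -/
def IsUpperCone (r : X → X → Prop) (A : Set X) : Prop := ∃ x ∈ A, A = upCl r {x}

/-- `A` is an upper set: `↑(A) ⊆ A`. -/
def IsUpperSetT (r : X → X → Prop) (A : Set X) : Prop := upCl r A ⊆ A

/-- `A` is directed. -/
def IsDirectedT (r : X → X → Prop) (A : Set X) : Prop :=
  A.Nonempty ∧ ∀ x ∈ A, ∀ y ∈ A, x ≠ y → ∃ z ∈ A, z ∈ ubs r {x, y}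

/-- `(X, r)` is a domain t-set: every directed subset has nonempty supremum set. -/
def IsDomainT (r : X → X → Prop) : Prop :=
  ∀ A : Set X, IsDirectedT r A → (sups r A).Nonempty

/-- Bounded complete t-set. -/
def BoundedCompleteT (r : X → X → Prop) : Prop :=
  IsUpperCone r (Set.univ : Set X) ∧
    ∀ x y : X, ubs r {x, y} = ∅ ∨ IsUpperCone r (ubs r {x, y})

/-- Finitely complete t-set. -/
def FinitelyCompleteT (r : X → X → Prop) : Prop :=
  IsUpperCone r (Set.univ : Set X) ∧ ∀ x y : X, IsUpperCone r (ubs r {x, y})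

/-- `A` is finitary: there is a finite `F ⊆ A` with `A ⊆ ↑(F)`. -/
def IsFinitaryT (r : X → X → Prop) (A : Set X) : Prop :=
  ∃ F : Set X, F ⊆ A ∧ F.Finite ∧ A ⊆ upCl r F

/-- Finitarily complete t-set. -/
def FinitarilyCompleteT (r : X → X → Prop) : Prop :=
  IsFinitaryT r (Set.univ : Set X) ∧ ∀ x y : X, IsFinitaryT r (ubs r {x, y})

/-- Strongly compact subset of a topological t-set. -/
def StronglyCompactT [TopologicalSpace X] (r : X → X → Prop) (A : Set X) : Prop :=
  ∀ O : Set X, IsOpen O → A ⊆ O → ∃ F : Set X, IsFinitaryT r F ∧ A ⊆ F ∧ F ⊆ O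

/-- Strongly compactly complete topological t-set. -/
def StronglyCompactlyCompleteT [TopologicalSpace X] (r : X → X → Prop) : Prop :=
  StronglyCompactT r (Set.univ : Set X) ∧ ∀ x y : X, StronglyCompactT r (ubs r {x, y})

/-- Compactly complete topological t-set. -/
def CompactlyCompleteT [TopologicalSpace X] (r : X → X → Prop) : Prop :=
  IsCompact (Set.univ : Set X) ∧ ∀ x y : X, IsCompact (ubs r {x, y})

theorem ubs_empty (r : X → X → Prop) : ubs r (∅ : Set X) = Set.univ := by
  ext z
  simp [ubs]

theorem isUpperSetT_ubs {r : X → X → Prop} (htrans : Transitive r) (A : Set X) :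
    IsUpperSetT r (ubs r A) := by
  rintro z ⟨y, hy, hyz⟩ a ha
  exact htrans (hy a ha) hyz

theorem mem_upCl_singleton {r : X → X → Prop} {x z : X} : z ∈ upCl r {x} ↔ r x z := by
  simp [upCl]

theorem IsUpperSetT.isUpperCone_iff {r : X → X → Prop} {A : Set X} (hA : IsUpperSetT r A) :
    IsUpperCone r A ↔ (les r A).Nonempty := by
  constructor
  · rintro ⟨x, hx, h⟩
    exact ⟨x, hx, fun y hy => mem_upCl_singleton.1 (h ▸ hy)⟩
  · rintro ⟨x, hx, h⟩
    refine ⟨x, hx, Set.ext fun z => ⟨fun hz => mem_upCl_singleton.2 (h z hz), fun hz => ?_⟩⟩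
    exact hA ⟨x, hx, mem_upCl_singleton.1 hz⟩

theorem ubs_eq_empty_or_isUpperCone_iff {r : X → X → Prop} (htrans : Transitive r) (A : Set X) :
    (ubs r A = ∅ ∨ IsUpperCone r (ubs r A)) ↔ ((ubs r A).Nonempty → (sups r A).Nonempty) := by
  rw [(isUpperSetT_ubs htrans A).isUpperCone_iff, Set.nonempty_iff_ne_empty (s := ubs r A)]
  exact or_iff_not_imp_left

theorem isUpperCone_univ_iff (r : X → X → Prop) :
    IsUpperCone r (Set.univ : Set X) ↔ (les r (Set.univ : Set X)).Nonempty :=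
  IsUpperSetT.isUpperCone_iff (Set.subset_univ _)

/-- A supremum `s` of `S` may replace `S` when upper bounds are taken. -/
theorem ubs_insert_eq {r : X → X → Prop} (htrans : Transitive r) {S : Set X} {s : X}
    (hs : s ∈ sups r S) (a : X) : ubs r (insert a S) = ubs r {a, s} := by
  ext z
  constructor
  · rintro hz y (rfl | rfl)
    · exact hz _ (Set.mem_insert _ _)
    · exact hs.2 z fun b hb => hz b (Set.mem_insert_of_mem _ hb)
  · rintro hz y (rfl | hy)
    · exact hz _ (Set.mem_insert _ _)
    · exact htrans (hs.1 y hy) (hz s (Set.mem_insert_of_mem _ rfl))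

/-- Characterizations of bounded complete t-sets. -/
theorem boundedComplete_tfae [Nonempty X] (r : X → X → Prop) (htrans : Transitive r) :
    List.TFAE
      [BoundedCompleteT r,
       (les r (Set.univ : Set X)).Nonempty ∧
         ∀ x y : X, (ubs r {x, y}).Nonempty → (sups r {x, y}).Nonempty,
       ∀ A : Set X, A.Finite → (ubs r A).Nonempty → (sups r A).Nonempty,
       ∀ A : Set X, A.Finite → ubs r A = ∅ ∨ IsUpperCone r (ubs r A)] := by
  tfae_have 1 ↔ 2 := by
    rw [BoundedCompleteT, isUpperCone_univ_iff]
    simp only [ubs_eq_empty_or_isUpperCone_iff htrans]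
  tfae_have 3 ↔ 4 := by
    simp only [ubs_eq_empty_or_isUpperCone_iff htrans]
  tfae_have 3 → 2 := by
    intro h
    refine ⟨?_, fun x y => h {x, y} (Set.toFinite _)⟩
    have h0 := h ∅ Set.finite_empty
    rw [sups, ubs_empty] at h0
    exact h0 Set.univ_nonempty
  tfae_have 2 → 3 := by
    rintro ⟨h0, h2⟩ A hA
    induction A, hA using Set.Finite.induction_on with
    | empty =>
      intro _
      rwa [sups, ubs_empty]
    | @insert a S _ _ ih =>
      rintro ⟨u, hu⟩
      obtain ⟨s, hs⟩ := ih ⟨u, fun b hb => hu b (Set.mem_insert_of_mem _ hb)⟩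
      rw [sups, ubs_insert_eq htrans hs a]
      exact h2 a s (ubs_insert_eq htrans hs a ▸ ⟨u, hu⟩)
  tfae_finish
end

section
/- For a t-set (X, ⪯) the following are equivalent: (1) for every subset A of X that is bounded from above (ub(A) ≠ ∅), sup(A) ≠ ∅; (2) for every nonempty subset A of X, inf(A) ≠ ∅. -/
variable {X : Type*}

/-- Every subset bounded from above has a supremum iff every nonempty subset has an infimum. -/
theorem sup_bounded_iff_inf_nonempty [Nonempty X] (r : X → X → Prop) (htrans : Transitive r) :
    (∀ A : Set X, (ubs r A).Nonempty → (sups r A).Nonempty) ↔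
      (∀ A : Set X, A.Nonempty → (infs r A).Nonempty) := by
  constructor
  -- `A ⊆ ub(lb(A))`, so a supremum of `lb(A)` is both a lower bound of `A` and largest among them.
  · intro h A ⟨a, ha⟩
    obtain ⟨s, hs, hle⟩ := h (lbs r A) ⟨a, fun y hy => hy a ha⟩
    exact ⟨s, fun y hy => hle y fun z hz => hz y hy, hs⟩
  -- Dually, `A ⊆ lb(ub(A))`, so an infimum of `ub(A)` is a supremum of `A`.
  · intro h A hA
    obtain ⟨s, hs, hge⟩ := h (ubs r A) hA
    exact ⟨s, fun y hy => hge y fun z hz => hz y hy, hs⟩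
end

section
/- For a domain t-set (X, ⪯) (a t-set in which every directed subset has nonempty supremum), the following are equivalent: (1) X is a bounded complete t-set; (2) le(X) ≠ ∅ and for all x, y ∈ X with ub({x, y}) ≠ ∅ one has sup({x, y}) ≠ ∅; (3) for every finite subset A bounded from above, sup(A) ≠ ∅; (4) for every finite subset A of X, ub(A) is either empty or an upper cone; (5) for every subset A bounded from above, sup(A) ≠ ∅; (6) for every nonempty subset A of X, inf(A) ≠ ∅. -/
/-!
A set of upper bounds is an upper set, so it is an upper cone exactly when it has a least element;
since `ub(∅) = X`, this identifies (1) with (2) and (3) with (4).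
(2) gives (3) by induction on the finite set, because a supremum of `{a, b}` with `b ∈ sup(B)` is a
supremum of `B ∪ {a}`. The domain hypothesis enters only in (3) ⇒ (5): if `A` is bounded, the
suprema of the finite subsets of `A` form a directed set, and its supremum is a supremum of `A`.
Finally, (5) and (6) are exchanged by the Galois connection between `ub` and `lb`:
a supremum of `lb(A)` is an infimum of `A`, and an infimum of `ub(A)` is a supremum of `A`.
-/

variable {X : Type*}

theorem isUpperCone_ubs_iff {r : X → X → Prop} (htrans : Transitive r) (A : Set X) :
    IsUpperCone r (ubs r A) ↔ (sups r A).Nonempty := by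
  constructor
  · rintro ⟨x, hx, h⟩
    refine ⟨x, hx, fun y hy => ?_⟩
    rw [h] at hy
    obtain ⟨z, rfl, hz⟩ := hy
    exact hz
  · rintro ⟨x, hx, h⟩
    refine ⟨x, hx, Set.Subset.antisymm (fun y hy => ⟨x, rfl, h y hy⟩) ?_⟩
    rintro y ⟨z, rfl, hz⟩ a ha
    exact htrans (hx a ha) hz

theorem sups_finite_nonempty {r : X → X → Prop} (htrans : Transitive r)
    (hbot : (les r (Set.univ : Set X)).Nonempty)
    (hpair : ∀ x y : X, (ubs r {x, y}).Nonempty → (sups r {x, y}).Nonempty)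
    {A : Set X} (hA : A.Finite) : (ubs r A).Nonempty → (sups r A).Nonempty := by
  induction A, hA using Set.Finite.induction_on with
  | empty =>
    intro _
    rwa [sups, ubs_empty]
  | @insert a B _ _ ih =>
    rintro ⟨u, hu⟩
    obtain ⟨b, hb, hbl⟩ := ih ⟨u, fun y hy => hu y (Or.inr hy)⟩
    have key : ∀ v ∈ ubs r (insert a B), v ∈ ubs r {a, b} := by
      rintro v hv y (rfl | rfl)
      · exact hv _ (Or.inl rfl)
      · exact hbl v fun y hy => hv y (Or.inr hy)
    obtain ⟨c, hc, hcl⟩ := hpair a b ⟨u, key u hu⟩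
    refine ⟨c, ?_, fun v hv => hcl v (key v hv)⟩
    rintro y (rfl | hy)
    · exact hc _ (Or.inl rfl)
    · exact htrans (hb y hy) (hc b (Or.inr rfl))

/-- The suprema of the finite subsets of a bounded set form a directed set, whose supremum is the
one sought. -/
theorem sups_nonempty_of_finite {r : X → X → Prop} (htrans : Transitive r) (hdom : IsDomainT r)
    (hfin : ∀ A : Set X, A.Finite → (ubs r A).Nonempty → (sups r A).Nonempty)
    {A : Set X} (hA : (ubs r A).Nonempty) : (sups r A).Nonempty := by
  obtain ⟨u, hu⟩ := hA
  have hF : ∀ F : Set X, F.Finite → F ⊆ A → (sups r F).Nonempty := fun F hF hFA =>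
    hfin F hF ⟨u, fun y hy => hu y (hFA hy)⟩
  obtain ⟨d, hd, hdl⟩ := hdom {s | ∃ F : Set X, F.Finite ∧ F ⊆ A ∧ s ∈ sups r F} (by
    constructor
    · obtain ⟨s, hs⟩ := hF ∅ Set.finite_empty (Set.empty_subset A)
      exact ⟨s, ∅, Set.finite_empty, Set.empty_subset A, hs⟩
    · rintro s ⟨F, hFf, hFA, hs⟩ t ⟨G, hGf, hGA, ht⟩ _
      obtain ⟨w, hw⟩ := hF (F ∪ G) (hFf.union hGf) (Set.union_subset hFA hGA)
      refine ⟨w, ⟨F ∪ G, hFf.union hGf, Set.union_subset hFA hGA, hw⟩, ?_⟩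
      rintro y (rfl | rfl)
      · exact hs.2 w fun y hy => hw.1 y (Or.inl hy)
      · exact ht.2 w fun y hy => hw.1 y (Or.inr hy))
  refine ⟨d, fun a ha => ?_, fun v hv => hdl v ?_⟩
  · -- `r` need not be reflexive, so `a` itself may fail to be a supremum of `{a}`.
    have haA : ({a} : Set X) ⊆ A := Set.singleton_subset_iff.2 ha
    obtain ⟨s, hs⟩ := hF {a} (Set.finite_singleton a) haA
    exact htrans (hs.1 a rfl) (hd s ⟨{a}, Set.finite_singleton a, haA, hs⟩)
  · rintro s ⟨F, _, hFA, hs⟩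
    exact hs.2 v fun y hy => hv y (hFA hy)

/-- Characterizations of bounded complete domain t-sets. -/
theorem boundedCompleteDomain_tfae [Nonempty X] (r : X → X → Prop) (htrans : Transitive r)
    (hdom : IsDomainT r) :
    List.TFAE
      [BoundedCompleteT r,
       (les r (Set.univ : Set X)).Nonempty ∧
         ∀ x y : X, (ubs r {x, y}).Nonempty → (sups r {x, y}).Nonempty,
       ∀ A : Set X, A.Finite → (ubs r A).Nonempty → (sups r A).Nonempty,
       ∀ A : Set X, A.Finite → ubs r A = ∅ ∨ IsUpperCone r (ubs r A),
       ∀ A : Set X, (ubs r A).Nonempty → (sups r A).Nonempty,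
       ∀ A : Set X, A.Nonempty → (infs r A).Nonempty] := by
  tfae_have 1 ↔ 2 := by
    refine and_congr ?_ (forall₂_congr fun x y => ubs_eq_empty_or_isUpperCone_iff htrans {x, y})
    rw [← ubs_empty r]
    exact isUpperCone_ubs_iff htrans ∅
  tfae_have 2 → 3 := fun h A hA => sups_finite_nonempty htrans h.1 h.2 hA
  tfae_have 3 → 2 := fun h => by
    refine ⟨?_, fun x y => h {x, y} (Set.toFinite _)⟩
    have h0 := h ∅ Set.finite_empty
    rw [sups, ubs_empty] at h0
    exact h0 Set.univ_nonempty
  tfae_have 4 ↔ 3 := forall₂_congr fun A _ => ubs_eq_empty_or_isUpperCone_iff htrans A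
  tfae_have 3 → 5 := fun h A hA => sups_nonempty_of_finite htrans hdom h hA
  tfae_have 5 → 3 := fun h A _ => h A
  tfae_have 5 → 6 := by
    rintro h A ⟨a, ha⟩
    obtain ⟨s, hs, hsl⟩ := h (lbs r A) ⟨a, fun y hy => hy a ha⟩
    exact ⟨s, fun b hb => hsl b fun y hy => hy b hb, hs⟩
  tfae_have 6 → 5 := by
    intro h A hA
    obtain ⟨i, hi, hil⟩ := h (ubs r A) hA
    exact ⟨i, fun a ha => hil a fun y hy => hy a ha, hi⟩
  tfae_finish
end

section
/- Let (X, ⪯, τ) be a topological t-set. If X is strongly compactly complete, then X is a finitary subset of itself and the intersection of any two finitary upper subsets of X is strongly compact. -/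
/-!
A finitary upper set `A` equals `↑F` for some finite `F ⊆ A`. Hence, for finitary upper sets
`A = ↑F` and `B = ↑G`, the intersection `A ∩ B` is the finite union of the sets `ub {x, y}` with
`x ∈ F` and `y ∈ G`. Each of these is strongly compact by hypothesis, and strong compactness passes
to finite unions (`StronglyCompactT.biUnion`) because finitariness does (`IsFinitaryT.biUnion`).
For `X` itself, only the open set `X` contains `X`, so strong compactness means finitariness.
-/

variable {X : Type*}

theorem IsFinitaryT.biUnion {ι : Type*} {r : X → X → Prop} {s : Set ι} (hs : s.Finite)
    {f : ι → Set X} (hf : ∀ i ∈ s, IsFinitaryT r (f i)) : IsFinitaryT r (⋃ i ∈ s, f i) := by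
  choose! F hFsub hFfin hFup using hf
  refine ⟨⋃ i ∈ s, F i, Set.iUnion₂_mono hFsub, hs.biUnion hFfin, ?_⟩
  intro x hx
  obtain ⟨i, hi, hxi⟩ := Set.mem_iUnion₂.1 hx
  obtain ⟨y, hy, hyx⟩ := hFup i hi hxi
  exact ⟨y, Set.mem_iUnion₂.2 ⟨i, hi, hy⟩, hyx⟩

theorem StronglyCompactT.biUnion {ι : Type*} [TopologicalSpace X] {r : X → X → Prop} {s : Set ι}
    (hs : s.Finite) {f : ι → Set X} (hf : ∀ i ∈ s, StronglyCompactT r (f i)) :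
    StronglyCompactT r (⋃ i ∈ s, f i) := by
  intro O hO hsub
  have hex : ∀ i ∈ s, ∃ K : Set X, IsFinitaryT r K ∧ f i ⊆ K ∧ K ⊆ O := fun i hi =>
    hf i hi O hO ((Set.subset_biUnion_of_mem hi).trans hsub)
  choose! K hKfin hfK hKO using hex
  exact ⟨⋃ i ∈ s, K i, IsFinitaryT.biUnion hs hKfin, Set.iUnion₂_mono hfK, Set.iUnion₂_subset hKO⟩

/-- If `X` is strongly compactly complete then `X` is finitary and intersections of two
finitary upper sets are strongly compact. -/
theorem stronglyCompactlyComplete_imp [Nonempty X] [TopologicalSpace X] (r : X → X → Prop)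
    (htrans : Transitive r) (h : StronglyCompactlyCompleteT r) :
    IsFinitaryT r (Set.univ : Set X) ∧
      ∀ A B : Set X, IsFinitaryT r A → IsUpperSetT r A → IsFinitaryT r B → IsUpperSetT r B →
        StronglyCompactT r (A ∩ B) := by 
  refine ⟨?_, ?_⟩
  · obtain ⟨F, hF, hsub, -⟩ := h.1 Set.univ isOpen_univ subset_rfl
    rwa [Set.univ_subset_iff.1 hsub] at hF
  · rintro A B ⟨F, hFA, hFfin, hAF⟩ hA ⟨G, hGB, hGfin, hBG⟩ hB
    have hAB : A ∩ B = ⋃ p ∈ F ×ˢ G, ubs r {p.1, p.2} := by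
      ext z
      simp only [Set.mem_iUnion₂]
      constructor
      · rintro ⟨hzA, hzB⟩
        obtain ⟨x, hx, hxz⟩ := hAF hzA
        obtain ⟨y, hy, hyz⟩ := hBG hzB
        refine ⟨(x, y), ⟨hx, hy⟩, ?_⟩
        rintro w (rfl | rfl)
        exacts [hxz, hyz]
      · rintro ⟨⟨x, y⟩, ⟨hx, hy⟩, hz⟩
        exact ⟨hA ⟨x, hFA hx, hz x (Or.inl rfl)⟩, hB ⟨y, hGB hy, hz y (Or.inr rfl)⟩⟩
    rw [hAB]
    exact StronglyCompactT.biUnion (hFfin.prod hGfin) fun p _ => h.2 p.1 p.2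
end

section
/- Let (X, ⪯, τ) be a topological t-set such that ⪯ is reflexive and every member of τ is an upper set. If X is a finitary subset of itself and the intersection of any two finitary upper subsets of X is compact, then X is compactly complete. -/
variable {X : Type*}

/-- If `r` is reflexive, every open set is an upper set, `X` is finitary and intersections of
two finitary upper sets are compact, then `X` is compactly complete. -/
theorem imp_compactlyComplete [Nonempty X] [TopologicalSpace X] (r : X → X → Prop)
    (hrefl : Reflexive r) (htrans : Transitive r)
    (hopen : ∀ O : Set X, IsOpen O → IsUpperSetT r O)
    (hfin : IsFinitaryT r (Set.univ : Set X))
    (hint : ∀ A B : Set X, IsFinitaryT r A → IsUpperSetT r A → IsFinitaryT r B →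
      IsUpperSetT r B → IsCompact (A ∩ B)) :
    CompactlyCompleteT r := by
  -- The upper bounds of `{x, y}` form `↑x ∩ ↑y`, so it suffices that principal upper closures
  -- are finitary (by reflexivity) and upper (by transitivity).
  have up : ∀ z, IsUpperSetT r (upCl r {z}) := by
    rintro z w ⟨v, ⟨u, rfl, huv⟩, hvw⟩
    exact ⟨u, rfl, htrans huv hvw⟩
  have fin : ∀ z, IsFinitaryT r (upCl r {z}) := fun z =>
    ⟨{z}, by rintro w rfl; exact ⟨w, rfl, hrefl w⟩, Set.finite_singleton z, subset_rfl⟩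
  refine ⟨?_, fun x y => ?_⟩
  · simpa using hint Set.univ Set.univ hfin (Set.subset_univ _) hfin (Set.subset_univ _)
  · have h : ubs r {x, y} = upCl r {x} ∩ upCl r {y} := by
      ext z
      simp [ubs, upCl]
    rw [h]
    exact hint _ _ (fin x) (up x) (fin y) (up y)
end
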